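/- Let B be a bivector in ℝ_{p,q,r} for which μ ≠ 0 is an eigenvalue (so ±1 ∈ σ(B_μ) where B_μ := B/μ), and suppose the outer tangent ta∧(B_μ) exists. Then the outer exponential factorizes as Λ^{B_μ} = Λ^{B_μ − ta∧(B_μ)} Λ^{ta∧(B_μ)}. -/

import Mathlib

/-! Common setup: the real geometric algebra `ℝ_{p,q,r}`, grade projections `⟨·⟩_ℓ`,
the commutator product `×`, the wedge powers `W_j`, the outer exponential and outer
trigonometric functions, the characteristic polynomial data `M_μ`, and the
complexification `ℂ ⊗ ℝ_{p,q,r}`. -/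

noncomputable section

open CliffordAlgebra TensorProduct

/-- The diagonal quadratic form of signature `(p,q,r)` on `ℝⁿ`, `n = p+q+r`:
`p` basis vectors of square `+1`, `q` of square `-1`, `r` of square `0`.
`ℝ_{p,q,r} := CliffordAlgebra (sigQ p q r)`. -/
def sigQ (p q r : ℕ) : QuadraticForm ℝ (Fin (p + q + r) → ℝ) :=
  QuadraticMap.weightedSumSquares ℝ
    (fun i : Fin (p + q + r) => if (i : ℕ) < p then (1 : ℝ) else if (i : ℕ) < p + q then -1 else 0)

variable {K : Type*} [Field K] [CharZero K] {M : Type*} [AddCommGroup M] [Module K M]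

/-- The grade-`ℓ` component `⟨x⟩_ℓ` of an element of a Clifford algebra, obtained by
transporting the grading of the exterior algebra along `CliffordAlgebra.equivExterior`. -/
def gradeProj (Q : QuadraticForm K M) (ℓ : ℕ) (x : CliffordAlgebra Q) : CliffordAlgebra Q :=
  letI : Invertible (2 : K) := invertibleOfNonzero two_ne_zero
  (equivExterior Q).symm
    (DirectSum.decompose (fun n : ℕ => ⋀[K]^n M) (equivExterior Q x) ℓ : ExteriorAlgebra K M)

/-- `x` is homogeneous of grade `ℓ`; in particular `IsGrade Q 2 B` says `B` is a bivector. -/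
def IsGrade (Q : QuadraticForm K M) (ℓ : ℕ) (x : CliffordAlgebra Q) : Prop :=
  gradeProj Q ℓ x = x

/-- The commutator product `x × y := (xy - yx)/2`. -/
def cprod {Q : QuadraticForm K M} (x y : CliffordAlgebra Q) : CliffordAlgebra Q :=
  (2 : K)⁻¹ • (x * y - y * x)

/-- `W_j := (1/j!) ⟨B^j⟩_{2j}`, the normalized `j`-fold wedge power of `B`. -/
def Wj (Q : QuadraticForm K M) (B : CliffordAlgebra Q) (j : ℕ) : CliffordAlgebra Q :=
  ((j.factorial : K)⁻¹) • gradeProj Q (2 * j) (B ^ j)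

/-- `B` has effective dimension `2k`: `k` is the largest integer with `W_k ≠ 0`. -/
def HasEffDim (Q : QuadraticForm K M) (B : CliffordAlgebra Q) (k : ℕ) : Prop :=
  Wj Q B k ≠ 0 ∧ ∀ j, k < j → Wj Q B j = 0

/-- The outer exponential `Λ^B = Σ_{j≥0} W_j`; `n` is any bound beyond which all the `W_j`
vanish (e.g. the dimension of the underlying space), so the sum is complete. -/
def outerExp (Q : QuadraticForm K M) (n : ℕ) (B : CliffordAlgebra Q) : CliffordAlgebra Q :=
  ∑ j ∈ Finset.range (n + 1), Wj Q B j

/-- The outer cosine `co∧(B) := (Λ^B + Λ^{-B})/2`. -/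
def coW (Q : QuadraticForm K M) (n : ℕ) (B : CliffordAlgebra Q) : CliffordAlgebra Q :=
  (2 : K)⁻¹ • (outerExp Q n B + outerExp Q n (-B))

/-- The outer sine `si∧(B) := (Λ^B - Λ^{-B})/2`. -/
def siW (Q : QuadraticForm K M) (n : ℕ) (B : CliffordAlgebra Q) : CliffordAlgebra Q :=
  (2 : K)⁻¹ • (outerExp Q n B - outerExp Q n (-B))

/-- `M_μ := Σ_{j=0}^k (-μ)^{k-j} W_j`; the characteristic polynomial of `B` is
`P_{2k}(μ) = M_μ * reverse M_μ`. -/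
def Mpoly (Q : QuadraticForm K M) (B : CliffordAlgebra Q) (k : ℕ) (μ : K) : CliffordAlgebra Q :=
  ∑ j ∈ Finset.range (k + 1), (-μ) ^ (k - j) • Wj Q B j

/-- The wedge (outer) product, `X ∧ Y := ⟨XY⟩_{i+j}` on homogeneous elements of grades `i`, `j`,
extended bilinearly; `n` bounds the occurring grades. -/
def wedgeProd (Q : QuadraticForm K M) (n : ℕ) (x y : CliffordAlgebra Q) : CliffordAlgebra Q :=
  ∑ i ∈ Finset.range (n + 1), ∑ j ∈ Finset.range (n + 1),
    gradeProj Q (i + j) (gradeProj Q i x * gradeProj Q j y)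

/-- The dot product of two vectors, `u · v = ⟨uv⟩₀ = polar(Q)(u,v)/2`, as a scalar. -/
def vdot (Q : QuadraticForm K M) (u v : M) : K := (2 : K)⁻¹ * QuadraticMap.polar Q u v

/-- The complexified quadratic form of signature `(p,q,r)`. -/
def sigQc (p q r : ℕ) : QuadraticForm ℂ (ℂ ⊗[ℝ] (Fin (p + q + r) → ℝ)) :=
  letI : Invertible (2 : ℝ) := invertibleOfNonzero two_ne_zero
  (sigQ p q r).baseChange ℂ

/-- The canonical embedding of `ℝ_{p,q,r}` into its complexification `ℂ ⊗ ℝ_{p,q,r}`. -/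
def toC (p q r : ℕ) (x : CliffordAlgebra (sigQ p q r)) : CliffordAlgebra (sigQc p q r) :=
  letI : Invertible (2 : ℝ) := invertibleOfNonzero two_ne_zero
  ofBaseChange ℂ (sigQ p q r) ((1 : ℂ) ⊗ₜ x)

/-- `v` is an eigenvector of the bivector `B` with eigenvalue `μ`: `v ≠ 0` and `B × v = μ v`. -/
def IsEigen (Q : QuadraticForm K M) (B : CliffordAlgebra Q) (μ : K) (v : M) : Prop :=
  v ≠ 0 ∧ cprod B (ι Q v) = μ • ι Q v

end

/-!
Transported to the exterior algebra, `Λ^B` becomes the exponential of a 2-form, so contracting it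
with a vector `v` multiplies it by `-(B × v)`, and the Clifford products are
`v Λ^B = (v - B × v) ∧ Λ^B` and `Λ^B v = (v + B × v) ∧ Λ^B`. If `1` is not an eigenvalue of
`v ↦ B × v`, these relations make the left ideal of `Λ^B` an ideal for the exterior product too; it
contains the exterior unit `Λ^B`, so `Λ^B` is invertible. Since `M_μ` is a multiple of `Λ^{-B_μ}`,
an eigenvalue `μ` therefore gives vectors `u`, `v` with `B_μ × u = u` and `B_μ × v = -v`, hence
`u Λ = 0 = Λ v` for `Λ = Λ^{B_μ}` and `v Λ⁻ = 0 = Λ⁻ u` for `Λ⁻ = Λ^{-B_μ}`. Invertibility of the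
outer cosine forces `u · v ≠ 0`. Normalizing `uv + vu = 1` gives `ta∧(B_μ) = uv - vu = 2 u ∧ v`,
`Λ^{ta} = 2uv` and `Λ^{B_μ - ta} = (Λ + vΛu) / 2`, whose product is `Λuv = Λ` because `u² = 0`.
-/

noncomputable section

open CliffordAlgebra
open scoped Nat TensorProduct

local infixl:70 "⌋" => contractLeft

section TruncatedExponential

variable {K : Type*} [Field K] {A : Type*} [Ring A] [Algebra K A]

variable (K) in
/-- The truncated exponential series `∑_{j ≤ n} x ^ j / j!` of an element of a `K`-algebra. In the
exterior algebra it is the image of the outer exponential. -/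
def truncExp (n : ℕ) (x : A) : A :=
  ∑ j ∈ Finset.range (n + 1), (j ! : K)⁻¹ • x ^ j

theorem truncExp_zero (n : ℕ) : truncExp K n (0 : A) = 1 := by
  simp [truncExp, Finset.sum_range_succ']

theorem truncExp_of_mul_self_eq_zero {n : ℕ} (hn : 1 ≤ n) {x : A} (hx : x * x = 0) :
    truncExp K n x = 1 + x := by
  have hpow : ∀ j, x ^ (j + 2) = 0 := fun j => by rw [pow_add, pow_two, hx, mul_zero]
  obtain ⟨m, rfl⟩ := Nat.exists_eq_add_of_le' hn
  rw [add_comm 1 x]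
  simp [truncExp, Finset.sum_range_succ', hpow]

theorem map_truncExp {B F : Type*} [Ring B] [Algebra K B] [FunLike F A B] [AlgHomClass F K A B]
    (f : F) (n : ℕ) (x : A) : f (truncExp K n x) = truncExp K n (f x) := by
  simp only [truncExp, map_sum, map_smul, map_pow]

theorem truncExp_add [CharZero K] {n : ℕ} {x y : A} (hxy : Commute x y) (hx : x ^ (n + 1) = 0)
    (hy : y ^ (n + 1) = 0) (hadd : (x + y) ^ (n + 1) = 0) :
    truncExp K n (x + y) = truncExp K n x * truncExp K n y := by
  let _ : Module ℚ A := Module.compHom A (algebraMap ℚ K)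
  have eq_exp : ∀ z : A, z ^ (n + 1) = 0 → truncExp K n z = IsNilpotent.exp z := fun z hz => by
    rw [IsNilpotent.exp_eq_sum hz]
    refine Finset.sum_congr rfl fun j _ => ?_
    change _ = algebraMap ℚ K (j ! : ℚ)⁻¹ • z ^ j
    rw [map_inv₀, map_natCast]
  rw [eq_exp _ hx, eq_exp _ hy, eq_exp _ hadd]
  exact IsNilpotent.exp_add_of_commute hxy ⟨_, hx⟩ ⟨_, hy⟩

end TruncatedExponential

section ExteriorAlgebra

variable {R : Type*} [CommRing R] {M : Type*} [AddCommGroup M] [Module R M]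

local notation "e" => ExteriorAlgebra.ι R

theorem involute_contractLeft {Q : QuadraticForm R M} (d : Module.Dual R M)
    (x : CliffordAlgebra Q) :
    involute (d⌋x) = -(d⌋(involute x)) := by
  induction x using CliffordAlgebra.left_induction with
  | algebraMap r => simp only [AlgHom.commutes, contractLeft_algebraMap, map_zero, neg_zero]
  | add x y hx hy => simp only [map_add, hx, hy, neg_add]
  | ι_mul x v hx =>
    simp only [contractLeft_ι_mul, map_sub, map_smul, map_mul, involute_ι, hx, neg_mul, map_neg,
      mul_neg, neg_neg, neg_sub]

theorem ι_mul_mem_exteriorPower (v : M) {n : ℕ} {x : ExteriorAlgebra R M} (hx : x ∈ ⋀[R]^n M) :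
    e v * x ∈ ⋀[R]^(n + 1) M :=
  (pow_succ' (LinearMap.range (e : M →ₗ[R] _)) n).ge
    (Submodule.mul_mem_mul (LinearMap.mem_range_self _ v) hx)

theorem ι_mem_exteriorPower_one (v : M) : e v ∈ ⋀[R]^1 M :=
  (pow_one (LinearMap.range (e : M →ₗ[R] _))).ge (LinearMap.mem_range_self _ v)

theorem ι_mul_ι_mem_exteriorPower (u v : M) : e u * e v ∈ ⋀[R]^2 M :=
  ι_mul_mem_exteriorPower u (ι_mem_exteriorPower_one v)

@[elab_as_elim]
theorem exteriorPower_two_induction {P : ∀ b : ExteriorAlgebra R M, b ∈ ⋀[R]^2 M → Prop}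
    (ι_mul_ι : ∀ u v, P (e u * e v) (ι_mul_ι_mem_exteriorPower u v))
    (add : ∀ b hb c hc, P b hb → P c hc → P (b + c) (add_mem hb hc))
    {b : ExteriorAlgebra R M} (hb : b ∈ ⋀[R]^2 M) : P b hb := by
  have hsq : ⋀[R]^2 M = LinearMap.range e * LinearMap.range e := pow_two _
  have hb' : b ∈ LinearMap.range e * LinearMap.range e := hsq ▸ hb
  induction hb' using Submodule.mul_induction_on' with
  | mem_mul_mem x hx y hy =>
    obtain ⟨u, rfl⟩ := hx
    obtain ⟨v, rfl⟩ := hy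
    exact ι_mul_ι u v
  | add x hx y hy ihx ihy => exact add x (hsq ▸ hx) y (hsq ▸ hy) (ihx _) (ihy _)

theorem ι_mul_ι_swap (u v : M) : e u * e v = -(e v * e u) :=
  eq_neg_of_add_eq_zero_left (ExteriorAlgebra.ι_add_mul_swap u v)

theorem commute_of_mem_exteriorPower_two {b : ExteriorAlgebra R M} (hb : b ∈ ⋀[R]^2 M)
    (x : ExteriorAlgebra R M) : Commute b x := by
  induction hb using exteriorPower_two_induction with
  | add b _ c _ hb hc => exact hb.add_left hc
  | ι_mul_ι u v =>
    induction x using CliffordAlgebra.left_induction with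
    | algebraMap r => exact Algebra.commute_algebraMap_right r _
    | add x y hx hy => exact hx.add_right hy
    | ι_mul x w hx =>
      refine Commute.mul_right ?_ hx
      change e u * e v * e w = e w * (e u * e v)
      rw [mul_assoc, ι_mul_ι_swap v w, mul_neg, ← mul_assoc, ι_mul_ι_swap u w, neg_mul, neg_neg,
        mul_assoc]

theorem pow_mem_exteriorPower {b : ExteriorAlgebra R M} (hb : b ∈ ⋀[R]^2 M) (j : ℕ) :
    b ^ j ∈ ⋀[R]^(2 * j) M :=
  (pow_mul (LinearMap.range (e : M →ₗ[R] _)) 2 j).ge (Submodule.pow_mem_pow _ hb j)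

theorem involute_of_mem_exteriorPower_two {b : ExteriorAlgebra R M} (hb : b ∈ ⋀[R]^2 M) :
    involute b = b := by
  induction hb using exteriorPower_two_induction with
  | add b _ c _ hb hc => rw [map_add, hb, hc]
  | ι_mul_ι u v => rw [map_mul, involute_ι, involute_ι, neg_mul_neg]

theorem contractLeft_mul_of_mem_exteriorPower_two (d : Module.Dual R M)
    {b : ExteriorAlgebra R M} (hb : b ∈ ⋀[R]^2 M) (x : ExteriorAlgebra R M) :
    d⌋(b * x) = d⌋b * x + b * (d⌋x) := by
  induction hb using exteriorPower_two_induction with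
  | add b _ c _ hb hc => rw [add_mul, map_add, hb, hc, map_add, add_mul, add_mul]; abel
  | ι_mul_ι u v =>
    rw [mul_assoc, contractLeft_ι_mul, contractLeft_ι_mul, contractLeft_ι_mul, contractLeft_ι,
      ← Algebra.commutes, ← Algebra.smul_def, mul_sub, sub_mul, mul_smul_comm, smul_mul_assoc,
      smul_mul_assoc, mul_assoc]
    abel

theorem contractLeft_of_mem_exteriorPower_zero (d : Module.Dual R M) {x : ExteriorAlgebra R M}
    (hx : x ∈ ⋀[R]^0 M) : d⌋x = 0 := by
  obtain ⟨r, rfl⟩ := Submodule.mem_one.1 ((pow_zero (LinearMap.range (e : M →ₗ[R] _))).le hx)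
  exact contractLeft_algebraMap _ d r

theorem contractLeft_mem_exteriorPower (d : Module.Dual R M) {n : ℕ} {x : ExteriorAlgebra R M}
    (hx : x ∈ ⋀[R]^(n + 1) M) : d⌋x ∈ ⋀[R]^n M := by
  induction n generalizing x with
  | zero =>
    obtain ⟨v, rfl⟩ := (pow_one (LinearMap.range (e : M →ₗ[R] _))).le hx
    rw [contractLeft_ι]
    exact Submodule.algebraMap_mem _
  | succ n ih =>
    have hsucc : ⋀[R]^(n + 2) M = LinearMap.range e * ⋀[R]^(n + 1) M := pow_succ' _ _
    rw [hsucc] at hx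
    induction hx using Submodule.mul_induction_on' with
    | mem_mul_mem _ hv y hy =>
      obtain ⟨v, rfl⟩ := hv
      rw [contractLeft_ι_mul]
      exact sub_mem (Submodule.smul_mem _ _ hy) (ι_mul_mem_exteriorPower v (ih hy))
    | add x _ y _ hx hy => exact (map_add (contractLeft d) x y).symm ▸ add_mem hx hy

theorem exists_contractLeft_eq_ι (d : Module.Dual R M) {b : ExteriorAlgebra R M}
    (hb : b ∈ ⋀[R]^2 M) : ∃ w : M, d⌋b = e w := by
  obtain ⟨w, hw⟩ := (pow_one (LinearMap.range (e : M →ₗ[R] _))).le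
    (contractLeft_mem_exteriorPower d hb)
  exact ⟨w, hw.symm⟩

theorem contractLeft_pow_succ (d : Module.Dual R M) {b : ExteriorAlgebra R M}
    (hb : b ∈ ⋀[R]^2 M) (j : ℕ) : d⌋(b ^ (j + 1)) = (j + 1 : R) • (d⌋b * b ^ j) := by
  induction j with
  | zero => simp
  | succ j ih =>
    rw [pow_succ', contractLeft_mul_of_mem_exteriorPower_two d hb, ih, mul_smul_comm,
      (commute_of_mem_exteriorPower_two hb _).eq, mul_assoc, ← pow_succ]
    push_cast
    module

theorem ι_mul_ι_mul_self (u v : M) : e u * e v * (e u * e v) = 0 := by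
  rw [← neg_eq_zero, ← neg_mul, ← ι_mul_ι_swap, mul_assoc, ← mul_assoc (e u),
    ExteriorAlgebra.ι_sq_zero, zero_mul, mul_zero]

theorem dual_smul_eq_dual_smul_of_ι_mul_ι_eq_zero {u v : M} (h : e u * e v = 0)
    (d : Module.Dual R M) : d u • v = d v • u := by
  have hd : d⌋(e u * e v) = e (d u • v - d v • u) := by
    rw [contractLeft_ι_mul, contractLeft_ι, ← Algebra.commutes, ← Algebra.smul_def, map_sub,
      map_smul, map_smul]
  rw [h, map_zero, eq_comm, ExteriorAlgebra.ι_eq_zero_iff, sub_eq_zero] at hd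
  exact hd

variable (R M) in
/-- The elements of degree less than `m` in the exterior algebra. The Clifford product agrees with
the exterior product up to terms of lower degree, and this filtration measures the error. -/
def degreeLT (m : ℕ) : Submodule R (ExteriorAlgebra R M) :=
  ⨆ i < m, ⋀[R]^i M

theorem exteriorPower_le_degreeLT {i m : ℕ} (h : i < m) : ⋀[R]^i M ≤ degreeLT R M m :=
  le_iSup₂_of_le i h le_rfl

theorem degreeLT_le_iff {m : ℕ} {N : Submodule R (ExteriorAlgebra R M)} :
    degreeLT R M m ≤ N ↔ ∀ i < m, ⋀[R]^i M ≤ N :=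
  iSup₂_le_iff

theorem degreeLT_mono : Monotone (degreeLT R M) := fun _ _ h =>
  degreeLT_le_iff.2 fun _ hi => exteriorPower_le_degreeLT (hi.trans_le h)

theorem ι_mul_mem_degreeLT (v : M) {m : ℕ} {x : ExteriorAlgebra R M} (hx : x ∈ degreeLT R M m) :
    e v * x ∈ degreeLT R M (m + 1) := by
  suffices degreeLT R M m ≤ (degreeLT R M (m + 1)).comap (LinearMap.mulLeft R (e v)) from this hx
  exact degreeLT_le_iff.2 fun i hi y hy =>
    exteriorPower_le_degreeLT (Nat.succ_lt_succ hi) (ι_mul_mem_exteriorPower v hy)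

theorem contractLeft_mem_degreeLT (d : Module.Dual R M) {m : ℕ} {x : ExteriorAlgebra R M}
    (hx : x ∈ degreeLT R M (m + 1)) : d⌋x ∈ degreeLT R M m := by
  suffices degreeLT R M (m + 1) ≤ (degreeLT R M m).comap (contractLeft d) from this hx
  refine degreeLT_le_iff.2 fun i hi y hy => ?_
  rw [Submodule.mem_comap]
  cases i with
  | zero => rw [contractLeft_of_mem_exteriorPower_zero d hy]; exact zero_mem _
  | succ i => exact exteriorPower_le_degreeLT (by lia) (contractLeft_mem_exteriorPower d hy)

theorem decompose_of_mem_degreeLT {m : ℕ} {x : ExteriorAlgebra R M} (hx : x ∈ degreeLT R M m) :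
    (DirectSum.decompose (fun i : ℕ => ⋀[R]^i M) x m : ExteriorAlgebra R M) = 0 := by
  suffices degreeLT R M m ≤ LinearMap.ker (GradedAlgebra.proj (fun i : ℕ => ⋀[R]^i M) m) from
    this hx
  exact degreeLT_le_iff.2 fun i hi y hy =>
    DirectSum.decompose_of_mem_ne (fun i : ℕ => ⋀[R]^i M) hy hi.ne

end ExteriorAlgebra

section ExteriorAlgebraOverField

variable {K : Type*} [Field K] {M : Type*} [AddCommGroup M] [Module K M]

theorem pow_eq_zero_of_mem_exteriorPower_two [FiniteDimensional K M] {m : ℕ}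
    (hm : Module.finrank K M < m) {b : ExteriorAlgebra K M} (hb : b ∈ ⋀[K]^2 M) : b ^ m = 0 := by
  have hbot : ⋀[K]^(2 * m) M = ⊥ := by
    rw [← Submodule.finrank_eq_zero, exteriorPower.finrank_eq, Nat.choose_eq_zero_of_lt (by lia)]
  exact (Submodule.mem_bot K).1 (hbot ▸ pow_mem_exteriorPower hb m)

theorem truncExp_smul_ι_mul_ι {n : ℕ} (hn : 1 ≤ n) (c : K) (u v : M) :
    truncExp K n (c • (ExteriorAlgebra.ι K u * ExteriorAlgebra.ι K v)) =
      1 + c • (ExteriorAlgebra.ι K u * ExteriorAlgebra.ι K v) :=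
  truncExp_of_mul_self_eq_zero hn <| by rw [smul_mul_smul_comm, ι_mul_ι_mul_self, smul_zero]

variable [CharZero K]

theorem contractLeft_truncExp (d : Module.Dual K M) {n : ℕ} {b : ExteriorAlgebra K M}
    (hb : b ∈ ⋀[K]^2 M) (hnil : b ^ (n + 1) = 0) :
    d⌋(truncExp K n b) = d⌋b * truncExp K n b := by
  have htop : d⌋b * b ^ n = 0 := by
    have h := contractLeft_pow_succ d hb n
    rw [hnil, map_zero, eq_comm, smul_eq_zero] at h
    exact h.resolve_left (Nat.cast_add_one_ne_zero n)
  have hterm (j : ℕ) :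
      ((j + 1)! : K)⁻¹ • (d⌋(b ^ (j + 1))) = d⌋b * ((j ! : K)⁻¹ • b ^ j) := by
    have hj : (j + 1 : K) ≠ 0 := Nat.cast_add_one_ne_zero j
    rw [contractLeft_pow_succ d hb, mul_smul_comm, smul_smul, Nat.factorial_succ]
    congr 1
    push_cast
    field_simp
  calc d⌋(truncExp K n b)
      = ∑ j ∈ Finset.range n, d⌋b * ((j ! : K)⁻¹ • b ^ j) := by
        simp [truncExp, Finset.sum_range_succ', hterm, contractLeft_one]
    _ = d⌋b * truncExp K n b := by
        rw [truncExp, Finset.sum_range_succ, mul_add, mul_smul_comm, htop, smul_zero, add_zero,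
          Finset.mul_sum]

theorem truncExp_add_of_mem_exteriorPower_two [FiniteDimensional K M] {n : ℕ}
    (hn : Module.finrank K M ≤ n) {b c : ExteriorAlgebra K M} (hb : b ∈ ⋀[K]^2 M)
    (hc : c ∈ ⋀[K]^2 M) : truncExp K n (b + c) = truncExp K n b * truncExp K n c :=
  have hnil : ∀ x ∈ ⋀[K]^2 M, x ^ (n + 1) = 0 := fun _ =>
    pow_eq_zero_of_mem_exteriorPower_two (Nat.lt_succ_of_le hn)
  truncExp_add (commute_of_mem_exteriorPower_two hb c) (hnil b hb) (hnil c hc)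
    (hnil _ (add_mem hb hc))

theorem truncExp_neg_mul_self [FiniteDimensional K M] {n : ℕ} (hn : Module.finrank K M ≤ n)
    {b : ExteriorAlgebra K M} (hb : b ∈ ⋀[K]^2 M) :
    truncExp K n (-b) * truncExp K n b = 1 := by
  rw [← truncExp_add_of_mem_exteriorPower_two hn (neg_mem hb) hb, neg_add_cancel, truncExp_zero]

end ExteriorAlgebraOverField

section CliffordExterior

variable {K : Type*} [Field K] [CharZero K] {M : Type*} [AddCommGroup M] [Module K M]
  {Q : QuadraticForm K M}

local notation "e" => ExteriorAlgebra.ι K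

-- The same inverse as in `gradeProj`, so that its `equivExterior` is the one used here.
local instance : Invertible (2 : K) := invertibleOfNonzero two_ne_zero

local notation "Φ" => equivExterior Q
local notation "⟪" v "⟫" => QuadraticMap.associated Q v

theorem equivExterior_ι_mul (v : M) (x : CliffordAlgebra Q) :
    Φ (ι Q v * x) = e v * Φ x + ⟪v⟫⌋(Φ x) := by
  have hneg (y : ExteriorAlgebra K M) : QuadraticMap.associated (-Q) v⌋y = -(⟪v⟫⌋y) := by
    rw [map_neg QuadraticMap.associated, LinearMap.neg_apply, map_neg, LinearMap.neg_apply]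
  refine (changeForm_ι_mul changeForm.associated_neg_proof v x).trans ?_
  rw [hneg, sub_neg_eq_add]
  rfl

theorem equivExterior_algebraMap (r : K) : Φ (algebraMap K _ r) = algebraMap K _ r :=
  changeForm_algebraMap changeForm.associated_neg_proof r

theorem equivExterior_one : Φ 1 = 1 :=
  changeForm_one changeForm.associated_neg_proof

theorem equivExterior_ι (v : M) : Φ (ι Q v) = e v :=
  changeForm_ι changeForm.associated_neg_proof v

theorem equivExterior_involute (x : CliffordAlgebra Q) : Φ (involute x) = involute (Φ x) := by
  induction x using CliffordAlgebra.left_induction with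
  | algebraMap r => simp only [AlgHom.commutes, equivExterior_algebraMap]
  | add x y hx hy => simp only [map_add, hx, hy]
  | ι_mul x v hx =>
    rw [map_mul, involute_ι, neg_mul, map_neg, equivExterior_ι_mul, equivExterior_ι_mul, hx,
      map_add, map_mul, involute_ι, involute_contractLeft, neg_mul, neg_add]

theorem equivExterior_mul_ι (v : M) (x : CliffordAlgebra Q) :
    Φ (x * ι Q v) = e v * Φ (involute x) - ⟪v⟫⌋(Φ (involute x)) := by
  induction x using CliffordAlgebra.left_induction with
  | algebraMap r =>
    rw [AlgHom.commutes, equivExterior_algebraMap, contractLeft_algebraMap, sub_zero,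
      ← Algebra.commutes r (e v), ← Algebra.smul_def, ← Algebra.smul_def, map_smul, equivExterior_ι]
  | add x y hx hy =>
    simp only [add_mul, map_add, hx, hy, mul_add]
    abel
  | ι_mul x u hx =>
    have hsymm : ⟪u⟫ v = ⟪v⟫ u := QuadraticMap.associated_isSymm K Q u v
    rw [mul_assoc, equivExterior_ι_mul, hx, map_mul, involute_ι, neg_mul, map_neg,
      equivExterior_ι_mul]
    simp only [mul_add, mul_sub, map_add, map_sub, mul_neg, map_neg, contractLeft_ι_mul,
      contractLeft_comm ⟪v⟫ ⟪u⟫, hsymm, ← mul_assoc, ι_mul_ι_swap u v, neg_mul]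
    abel

theorem two_smul_ι_mul_equivExterior (v : M) (x : CliffordAlgebra Q) :
    (2 : K) • (e v * Φ x) = Φ (ι Q v * x + involute x * ι Q v) := by
  rw [map_add, equivExterior_ι_mul, equivExterior_mul_ι, involute_involute]
  module

theorem isGrade_iff {ℓ : ℕ} {x : CliffordAlgebra Q} : IsGrade Q ℓ x ↔ Φ x ∈ ⋀[K]^ℓ M := by
  rw [IsGrade, gradeProj, LinearEquiv.symm_apply_eq]
  exact ⟨fun h => h ▸ SetLike.coe_mem _,
    DirectSum.decompose_of_mem_same (fun i : ℕ => ⋀[K]^i M)⟩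

theorem equivExterior_ι_mul_ι_sub (u v : M) :
    Φ (ι Q u * ι Q v - ι Q v * ι Q u) = (2 : K) • (e u * e v) := by
  rw [← equivExterior_ι (Q := Q) v, two_smul_ι_mul_equivExterior, involute_ι, neg_mul,
    sub_eq_add_neg]

theorem isGrade_two_ι_mul_ι_sub (u v : M) : IsGrade Q 2 (ι Q u * ι Q v - ι Q v * ι Q u) :=
  isGrade_iff.2 <| (equivExterior_ι_mul_ι_sub (Q := Q) u v).symm ▸
    Submodule.smul_mem _ _ (ι_mul_ι_mem_exteriorPower u v)

theorem IsGrade.smul {ℓ : ℕ} {x : CliffordAlgebra Q} (hx : IsGrade Q ℓ x) (c : K) :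
    IsGrade Q ℓ (c • x) :=
  isGrade_iff.2 <| (map_smul Φ c x).symm ▸ Submodule.smul_mem _ c (isGrade_iff.1 hx)

theorem IsGrade.neg {ℓ : ℕ} {x : CliffordAlgebra Q} (hx : IsGrade Q ℓ x) : IsGrade Q ℓ (-x) :=
  isGrade_iff.2 <| (map_neg Φ x).symm ▸ neg_mem (isGrade_iff.1 hx)

theorem IsGrade.sub {ℓ : ℕ} {x y : CliffordAlgebra Q} (hx : IsGrade Q ℓ x) (hy : IsGrade Q ℓ y) :
    IsGrade Q ℓ (x - y) :=
  isGrade_iff.2 <| (map_sub Φ x y).symm ▸ sub_mem (isGrade_iff.1 hx) (isGrade_iff.1 hy)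

theorem equivExterior_ι_mul_sub_mem_degreeLT (v : M) {m : ℕ} {x : CliffordAlgebra Q}
    {y : ExteriorAlgebra K M} (hy : y ∈ ⋀[K]^m M) (hxy : Φ x - y ∈ degreeLT K M m) :
    Φ (ι Q v * x) - e v * y ∈ degreeLT K M (m + 1) := by
  have hx : Φ x ∈ degreeLT K M (m + 1) := by
    rw [← sub_add_cancel (Φ x) y]
    exact add_mem (degreeLT_mono m.le_succ hxy) (exteriorPower_le_degreeLT m.lt_succ_self hy)
  rw [equivExterior_ι_mul, add_sub_right_comm, ← mul_sub]
  exact add_mem (ι_mul_mem_degreeLT v hxy)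
    (degreeLT_mono m.le_succ (contractLeft_mem_degreeLT _ hx))

theorem equivExterior_symm_ι_mul_ι (u v : M) :
    (Φ).symm (e u * e v) = ι Q u * ι Q v - algebraMap K _ (⟪u⟫ v) := by
  rw [LinearEquiv.symm_apply_eq, map_sub, equivExterior_ι_mul, equivExterior_ι, contractLeft_ι,
    equivExterior_algebraMap, add_sub_cancel_right]

theorem equivExterior_symm_mul_sub_mem_degreeLT {b : ExteriorAlgebra K M} (hb : b ∈ ⋀[K]^2 M)
    {m : ℕ} {x : CliffordAlgebra Q} {y : ExteriorAlgebra K M} (hy : y ∈ ⋀[K]^m M)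
    (hxy : Φ x - y ∈ degreeLT K M m) : Φ ((Φ).symm b * x) - b * y ∈ degreeLT K M (m + 2) := by
  induction hb using exteriorPower_two_induction with
  | add b _ c _ hb hc =>
    rw [map_add, add_mul, map_add, add_mul, add_sub_add_comm]
    exact add_mem hb hc
  | ι_mul_ι u v =>
    have huv := equivExterior_ι_mul_sub_mem_degreeLT u (ι_mul_mem_exteriorPower v hy)
      (equivExterior_ι_mul_sub_mem_degreeLT v hy hxy)
    have hx : Φ x ∈ degreeLT K M (m + 2) := by
      rw [← sub_add_cancel (Φ x) y]
      exact add_mem (degreeLT_mono (by lia) hxy) (exteriorPower_le_degreeLT (by lia) hy)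
    rw [equivExterior_symm_ι_mul_ι, sub_mul, ← Algebra.smul_def, map_sub, map_smul, mul_assoc,
      mul_assoc, sub_right_comm]
    exact sub_mem huv (Submodule.smul_mem _ _ hx)

theorem equivExterior_pow_sub_mem_degreeLT {B : CliffordAlgebra Q} (hB : IsGrade Q 2 B) (j : ℕ) :
    Φ (B ^ j) - Φ B ^ j ∈ degreeLT K M (2 * j) := by
  induction j with
  | zero => rw [pow_zero, pow_zero, equivExterior_one, sub_self]; exact zero_mem _
  | succ j ih =>
    have hΦB := isGrade_iff.1 hB
    have h := equivExterior_symm_mul_sub_mem_degreeLT hΦB (pow_mem_exteriorPower hΦB j) ih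
    rwa [LinearEquiv.symm_apply_apply, ← pow_succ', ← pow_succ'] at h

theorem equivExterior_Wj {B : CliffordAlgebra Q} (hB : IsGrade Q 2 B) (j : ℕ) :
    Φ (Wj Q B j) = (j ! : K)⁻¹ • Φ B ^ j := by
  have htop := DirectSum.decompose_of_mem_same (fun i : ℕ => ⋀[K]^i M)
    (pow_mem_exteriorPower (isGrade_iff.1 hB) j)
  have hrest := decompose_of_mem_degreeLT (equivExterior_pow_sub_mem_degreeLT hB j)
  rw [DirectSum.decompose_sub, DirectSum.sub_apply, AddSubgroupClass.coe_sub, htop,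
    sub_eq_zero] at hrest
  rw [Wj, map_smul, gradeProj, LinearEquiv.apply_symm_apply, hrest]

theorem Wj_smul {B : CliffordAlgebra Q} (hB : IsGrade Q 2 B) (c : K) (j : ℕ) :
    Wj Q (c • B) j = c ^ j • Wj Q B j := by
  apply (Φ).injective
  rw [map_smul, equivExterior_Wj hB, equivExterior_Wj (hB.smul c), map_smul, smul_pow, smul_comm]

theorem outerExp_eq_outerExp {B : CliffordAlgebra Q} {m n : ℕ}
    (hm : ∀ j, m < j → Wj Q B j = 0) (hn : ∀ j, n < j → Wj Q B j = 0) :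
    outerExp Q m B = outerExp Q n B := by
  wlog hle : m ≤ n generalizing m n
  · exact (this hn hm (le_of_not_ge hle)).symm
  exact (Finset.eventually_constant_sum hm (Nat.succ_le_succ hle)).symm

theorem Mpoly_eq_smul_outerExp {B : CliffordAlgebra Q} (hB : IsGrade Q 2 B) (k : ℕ) {μ : K}
    (hμ : μ ≠ 0) :
    Mpoly Q B k μ = (-μ) ^ k • outerExp Q k (-(μ⁻¹ • B)) := by
  rw [Mpoly, outerExp, ← neg_smul, Finset.smul_sum]
  refine Finset.sum_congr rfl fun j hj => ?_
  rw [Wj_smul hB, smul_smul, ← inv_neg, inv_pow,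
    pow_sub₀ _ (neg_ne_zero.2 hμ) (Finset.mem_range_succ_iff.1 hj)]

theorem equivExterior_outerExp {B : CliffordAlgebra Q} (hB : IsGrade Q 2 B) (n : ℕ) :
    Φ (outerExp Q n B) = truncExp K n (Φ B) := by
  simp only [outerExp, truncExp, map_sum, equivExterior_Wj hB]

theorem involute_outerExp {B : CliffordAlgebra Q} (hB : IsGrade Q 2 B) (n : ℕ) :
    involute (outerExp Q n B) = outerExp Q n B := by
  apply (Φ).injective
  rw [equivExterior_involute, equivExterior_outerExp hB, map_truncExp,
    involute_of_mem_exteriorPower_two (isGrade_iff.1 hB)]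

/-- The endomorphism `v ↦ B × v` of the space of vectors, for a bivector `B`. For a general
multivector, `B × v` is replaced by its grade-one part, so that the definition makes sense. -/
def bivectorAction (B : CliffordAlgebra Q) : Module.End K M :=
  ExteriorAlgebra.ιInv ∘ₗ (Φ).toLinearMap ∘ₗ
    ((2 : K)⁻¹ • (LinearMap.mulLeft K B - LinearMap.mulRight K B)) ∘ₗ ι Q

theorem bivectorAction_apply (B : CliffordAlgebra Q) (v : M) :
    bivectorAction B v = ExteriorAlgebra.ιInv (Φ (cprod B (ι Q v))) :=
  rfl

theorem bivectorAction_neg (B : CliffordAlgebra Q) : bivectorAction (-B) = -bivectorAction B := by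
  ext v
  have hneg : cprod (-B) (ι Q v) = -cprod B (ι Q v) := by
    simp only [cprod, neg_mul, mul_neg]
    module
  rw [LinearMap.neg_apply, bivectorAction_apply, bivectorAction_apply, hneg, map_neg, map_neg]

theorem ι_bivectorAction {B : CliffordAlgebra Q} (hB : IsGrade Q 2 B) (v : M) :
    e (bivectorAction B v) = -(⟪v⟫⌋(Φ B)) := by
  have hΦB := isGrade_iff.1 hB
  have hcprod : Φ (cprod B (ι Q v)) = -(⟪v⟫⌋(Φ B)) := by
    rw [cprod, map_smul, map_sub, equivExterior_mul_ι, equivExterior_ι_mul,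
      equivExterior_involute, involute_of_mem_exteriorPower_two hΦB]
    module
  obtain ⟨w, hw⟩ := exists_contractLeft_eq_ι ⟪v⟫ hΦB
  rw [bivectorAction_apply, hcprod, hw, ← map_neg, ExteriorAlgebra.ι_leftInverse]

theorem mul_mem_map_equivExterior {S : Submodule K (CliffordAlgebra Q)}
    (hleft : ∀ v, ∀ x ∈ S, ι Q v * x ∈ S) (hright : ∀ v, ∀ x ∈ S, involute x * ι Q v ∈ S)
    (y : ExteriorAlgebra K M) {z : ExteriorAlgebra K M} (hz : z ∈ S.map (Φ).toLinearMap) :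
    y * z ∈ S.map (Φ).toLinearMap := by
  induction y using CliffordAlgebra.left_induction with
  | algebraMap r => rw [← Algebra.smul_def]; exact Submodule.smul_mem _ r hz
  | add y y' hy hy' => rw [add_mul]; exact add_mem hy hy'
  | ι_mul y v hy =>
    obtain ⟨x, hx, hxy⟩ := hy
    refine ⟨(2 : K)⁻¹ • (ι Q v * x + involute x * ι Q v),
      S.smul_mem _ (add_mem (hleft v x hx) (hright v x hx)), ?_⟩
    rw [LinearEquiv.coe_coe, map_smul, ← two_smul_ι_mul_equivExterior, inv_smul_smul₀ two_ne_zero,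
      mul_assoc, ← hxy]
    rfl

variable {B : CliffordAlgebra Q}

/-- A pair of vectors `u`, `v` with `B × u = u`, `B × v = -v` and `uv + vu = 1`. Such a pair
determines the outer tangent of `B`. -/
structure IsNormalizedEigenpair (B : CliffordAlgebra Q) (u v : M) : Prop where
  apply_left : bivectorAction B u = u
  apply_right : bivectorAction B v = -v
  polar_eq_one : QuadraticMap.polar Q u v = 1

namespace IsNormalizedEigenpair

variable {u v : M}

protected theorem neg (h : IsNormalizedEigenpair B u v) : IsNormalizedEigenpair (-B) v u where
  apply_left := by rw [bivectorAction_neg, LinearMap.neg_apply, h.apply_right, neg_neg]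
  apply_right := by rw [bivectorAction_neg, LinearMap.neg_apply, h.apply_left]
  polar_eq_one := by rw [QuadraticMap.polar_comm, h.polar_eq_one]

theorem ι_mul_ι_add_swap (h : IsNormalizedEigenpair B u v) :
    ι Q u * ι Q v + ι Q v * ι Q u = 1 := by
  rw [CliffordAlgebra.ι_mul_ι_add_swap, h.polar_eq_one, map_one]

end IsNormalizedEigenpair

variable [FiniteDimensional K M] {n : ℕ}

theorem contractLeft_equivExterior_outerExp (hn : Module.finrank K M ≤ n) (hB : IsGrade Q 2 B)
    (v : M) : ⟪v⟫⌋(Φ (outerExp Q n B)) = -(e (bivectorAction B v) * Φ (outerExp Q n B)) := by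
  have hΦB := isGrade_iff.1 hB
  rw [ι_bivectorAction hB, equivExterior_outerExp hB, neg_mul, neg_neg, contractLeft_truncExp _ hΦB
    (pow_eq_zero_of_mem_exteriorPower_two (Nat.lt_succ_of_le hn) hΦB)]

theorem equivExterior_ι_mul_outerExp (hn : Module.finrank K M ≤ n) (hB : IsGrade Q 2 B) (v : M) :
    Φ (ι Q v * outerExp Q n B) = e (v - bivectorAction B v) * Φ (outerExp Q n B) := by
  rw [equivExterior_ι_mul, contractLeft_equivExterior_outerExp hn hB, map_sub, sub_mul,
    sub_eq_add_neg]

theorem equivExterior_outerExp_mul_ι (hn : Module.finrank K M ≤ n) (hB : IsGrade Q 2 B) (v : M) :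
    Φ (outerExp Q n B * ι Q v) = e (v + bivectorAction B v) * Φ (outerExp Q n B) := by
  rw [equivExterior_mul_ι, involute_outerExp hB, contractLeft_equivExterior_outerExp hn hB,
    map_add, add_mul, sub_neg_eq_add]

theorem ι_mul_outerExp_eq_zero (hn : Module.finrank K M ≤ n) (hB : IsGrade Q 2 B) {v : M}
    (hv : bivectorAction B v = v) : ι Q v * outerExp Q n B = 0 := by
  apply (Φ).injective
  rw [equivExterior_ι_mul_outerExp hn hB, hv, sub_self, map_zero, zero_mul, map_zero]

theorem outerExp_mul_ι_eq_zero (hn : Module.finrank K M ≤ n) (hB : IsGrade Q 2 B) {v : M}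
    (hv : bivectorAction B v = -v) : outerExp Q n B * ι Q v = 0 := by
  apply (Φ).injective
  rw [equivExterior_outerExp_mul_ι hn hB, hv, add_neg_cancel, map_zero, zero_mul, map_zero]

theorem truncExp_neg_mul_equivExterior_outerExp (hn : Module.finrank K M ≤ n)
    (hB : IsGrade Q 2 B) : truncExp K n (-Φ B) * Φ (outerExp Q n B) = 1 := by
  rw [equivExterior_outerExp hB, truncExp_neg_mul_self hn (isGrade_iff.1 hB)]

theorem outerExp_ne_zero (hn : Module.finrank K M ≤ n) (hB : IsGrade Q 2 B) :
    outerExp Q n B ≠ 0 := fun h => by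
  have hone := truncExp_neg_mul_equivExterior_outerExp hn hB
  rw [h, map_zero, mul_zero] at hone
  exact zero_ne_one hone

-- The left ideal generated by `Λ^B` is also stable under right multiplication by vectors, because
-- `Λ^B w = v Λ^B` as soon as `v - B × v = w + B × w`. Hence its image is an ideal of the exterior
-- algebra, where `Λ^B` is a unit.
theorem isUnit_outerExp (hn : Module.finrank K M ≤ n) (hB : IsGrade Q 2 B)
    (heigen : ¬(bivectorAction B).HasEigenvalue 1) : IsUnit (outerExp Q n B) := by
  have : Module.Finite K (ExteriorAlgebra K M) := .of_basis (Module.finBasis K M).ExteriorAlgebra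
  have : Module.Finite K (CliffordAlgebra Q) := .equiv (Φ).symm
  have : IsArtinianRing (CliffordAlgebra Q) := .of_finite K _
  have hsurj : Function.Surjective ⇑(1 - bivectorAction B) := by
    rw [Module.End.hasEigenvalue_iff_mem_spectrum, spectrum.notMem_iff, map_one,
      Module.End.isUnit_iff] at heigen
    exact heigen.surjective
  have hswap (w : M) : ∃ v, outerExp Q n B * ι Q w = ι Q v * outerExp Q n B := by
    obtain ⟨v, hv⟩ := hsurj (w + bivectorAction B w)
    refine ⟨v, (Φ).injective ?_⟩
    rw [equivExterior_outerExp_mul_ι hn hB, equivExterior_ι_mul_outerExp hn hB, ← hv]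
    rfl
  have hone := mul_mem_map_equivExterior
    (S := LinearMap.range (LinearMap.mulRight K (outerExp Q n B)))
    (by rintro v _ ⟨x, rfl⟩; exact ⟨ι Q v * x, mul_assoc ..⟩)
    (by
      rintro w _ ⟨x, rfl⟩
      obtain ⟨v, hv⟩ := hswap w
      refine ⟨involute x * ι Q v, ?_⟩
      simp only [LinearMap.mulRight_apply, map_mul, involute_outerExp hB, mul_assoc, hv])
    (truncExp K n (-Φ B)) ⟨outerExp Q n B, ⟨1, one_mul _⟩, rfl⟩
  rw [LinearEquiv.coe_coe, truncExp_neg_mul_equivExterior_outerExp hn hB] at hone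
  obtain ⟨_, ⟨y, rfl⟩, hy⟩ := hone
  exact .of_mul_eq_one_right y ((Φ).injective (hy.trans equivExterior_one.symm))

theorem hasEigenvalue_one_of_hasEigenvalue_neg_one (hB : IsGrade Q 2 B)
    (h : (bivectorAction B).HasEigenvalue (-1)) : (bivectorAction B).HasEigenvalue 1 := by
  by_contra hone
  obtain ⟨v, hv⟩ := h.exists_hasEigenvector
  have hzero := outerExp_mul_ι_eq_zero le_rfl hB (hv.apply_eq_smul.trans (neg_one_smul K v))
  rw [(isUnit_outerExp le_rfl hB hone).mul_right_eq_zero] at hzero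
  apply hv.2
  rw [← ExteriorAlgebra.ι_eq_zero_iff (R := K), ← equivExterior_ι (Q := Q), hzero, map_zero]

theorem hasEigenvalue_of_outerExp_neg_mul_reverse (hn : Module.finrank K M ≤ n)
    (hB : IsGrade Q 2 B) (h : outerExp Q n (-B) * reverse (outerExp Q n (-B)) = 0) :
    (bivectorAction B).HasEigenvalue 1 ∧ (bivectorAction B).HasEigenvalue (-1) := by
  have hunit : ¬IsUnit (outerExp Q n (-B)) := fun hunit =>
    outerExp_ne_zero hn hB.neg <| reverse_involutive.injective <| by
      rw [hunit.mul_right_eq_zero.1 h, map_zero]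
  have hneg : (bivectorAction B).HasEigenvalue (-1) := by
    obtain ⟨v, hv⟩ := (not_not.1 <| mt (isUnit_outerExp hn hB.neg) hunit).exists_hasEigenvector
    refine Module.End.hasEigenvalue_of_hasEigenvector (x := v)
      (Module.End.hasEigenvector_iff.2 ⟨Module.End.mem_eigenspace_iff.2 ?_, hv.2⟩)
    have hv' := hv.apply_eq_smul
    rw [bivectorAction_neg, LinearMap.neg_apply, one_smul] at hv'
    rw [neg_one_smul]
    exact neg_eq_iff_eq_neg.1 hv'
  exact ⟨hasEigenvalue_one_of_hasEigenvalue_neg_one hB hneg, hneg⟩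

theorem polar_ne_zero_of_hasEigenvector (hn : Module.finrank K M ≤ n) (hB : IsGrade Q 2 B)
    (hco : IsUnit (coW Q n B)) {u v : M} (hu : (bivectorAction B).HasEigenvector 1 u)
    (hv : (bivectorAction B).HasEigenvector (-1) v) : QuadraticMap.polar Q u v ≠ 0 := by
  intro hpolar
  have hAu : bivectorAction B u = u := hu.apply_eq_smul.trans (one_smul K u)
  have hAv : bivectorAction B v = -v := hv.apply_eq_smul.trans (neg_one_smul K v)
  have hswap : ι Q v * ι Q u = -(ι Q u * ι Q v) := by
    rw [eq_neg_iff_add_eq_zero, add_comm, ι_mul_ι_add_swap, hpolar, map_zero]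
  have hvu : ι Q v * ι Q u = 0 := by
    rw [← hco.mul_right_eq_zero, coW, smul_mul_assoc, add_mul, ← mul_assoc,
      outerExp_mul_ι_eq_zero hn hB hAv, hswap, mul_neg, ← mul_assoc,
      outerExp_mul_ι_eq_zero hn hB.neg (by rw [bivectorAction_neg, LinearMap.neg_apply, hAu])]
    simp only [zero_mul, neg_zero, add_zero, smul_zero]
  have hwedge : e u * e v = 0 := by
    have h := equivExterior_ι_mul_ι_sub (Q := Q) u v
    rw [hvu, neg_eq_zero.1 (hswap.symm.trans hvu), sub_zero, map_zero, eq_comm, smul_eq_zero] at h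
    exact h.resolve_left two_ne_zero
  have hdual (d : Module.Dual K M) : d v = 0 := by
    have h := dual_smul_eq_dual_smul_of_ι_mul_ι_eq_zero hwedge d
    have hA := congrArg (bivectorAction B) h
    rw [map_smul, map_smul, hAu, hAv, smul_neg, h] at hA
    have htwo : (2 : K) • d v • u = 0 := by rw [two_smul, add_eq_zero_iff_neg_eq, hA]
    exact (smul_eq_zero.1 ((smul_eq_zero.1 htwo).resolve_left two_ne_zero)).resolve_right hu.2
  exact hv.2 ((Module.forall_dual_apply_eq_zero_iff K v).1 hdual)

theorem exists_isNormalizedEigenpair (hn : Module.finrank K M ≤ n) (hB : IsGrade Q 2 B)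
    (hco : IsUnit (coW Q n B)) (hone : (bivectorAction B).HasEigenvalue 1)
    (hneg : (bivectorAction B).HasEigenvalue (-1)) :
    ∃ u v, IsNormalizedEigenpair B u v := by
  obtain ⟨u, hu⟩ := hone.exists_hasEigenvector
  obtain ⟨v, hv⟩ := hneg.exists_hasEigenvector
  refine ⟨(QuadraticMap.polar Q u v)⁻¹ • u, v, ?_, ?_, ?_⟩
  · rw [map_smul, hu.apply_eq_smul, one_smul]
  · rw [hv.apply_eq_smul, neg_one_smul]
  · rw [QuadraticMap.polar_smul_left, smul_eq_mul,
      inv_mul_cancel₀ (polar_ne_zero_of_hasEigenvector hn hB hco hu hv)]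

namespace IsNormalizedEigenpair

variable {u v : M}

theorem ι_mul_ι_mul_outerExp (h : IsNormalizedEigenpair B u v) (hn : Module.finrank K M ≤ n)
    (hB : IsGrade Q 2 B) : ι Q u * ι Q v * outerExp Q n B = outerExp Q n B := by
  rw [eq_sub_of_add_eq h.ι_mul_ι_add_swap, sub_mul, one_mul, mul_assoc,
    ι_mul_outerExp_eq_zero hn hB h.apply_left, mul_zero, sub_zero]

theorem outerExp_mul_ι_mul_ι (h : IsNormalizedEigenpair B u v) (hn : Module.finrank K M ≤ n)
    (hB : IsGrade Q 2 B) : outerExp Q n B * (ι Q u * ι Q v) = outerExp Q n B := by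
  rw [eq_sub_of_add_eq h.ι_mul_ι_add_swap, mul_sub, mul_one, ← mul_assoc,
    outerExp_mul_ι_eq_zero hn hB h.apply_right, zero_mul, sub_zero]

theorem ι_mul_self (h : IsNormalizedEigenpair B u v) (hB : IsGrade Q 2 B) :
    ι Q u * ι Q u = 0 := by
  have hL : ι Q u * ι Q u * outerExp Q (Module.finrank K M) B = 0 := by
    rw [mul_assoc, ι_mul_outerExp_eq_zero le_rfl hB h.apply_left, mul_zero]
  rw [ι_sq_scalar, ← Algebra.smul_def, smul_eq_zero] at hL
  rw [ι_sq_scalar, hL.resolve_right (outerExp_ne_zero le_rfl hB), map_zero]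

theorem siW_eq (h : IsNormalizedEigenpair B u v) (hn : Module.finrank K M ≤ n)
    (hB : IsGrade Q 2 B) :
    siW Q n B = (ι Q u * ι Q v - ι Q v * ι Q u) * coW Q n B := by
  have hu : ι Q v * ι Q u * outerExp Q n B = 0 := by
    rw [mul_assoc, ι_mul_outerExp_eq_zero hn hB h.apply_left, mul_zero]
  have hv : ι Q u * ι Q v * outerExp Q n (-B) = 0 := by
    rw [mul_assoc, ι_mul_outerExp_eq_zero hn hB.neg h.neg.apply_left, mul_zero]
  rw [siW, coW, mul_smul_comm, sub_mul, mul_add, mul_add, hu, hv,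
    h.ι_mul_ι_mul_outerExp hn hB, h.neg.ι_mul_ι_mul_outerExp hn hB.neg, add_zero, zero_add]

theorem finrank_pos (h : IsNormalizedEigenpair B u v) : 0 < Module.finrank K M := by
  have hu : u ≠ 0 := by
    rintro rfl
    exact zero_ne_one ((QuadraticMap.polar_zero_left Q v).symm.trans h.polar_eq_one)
  have : Nontrivial M := ⟨u, 0, hu⟩
  exact Module.finrank_pos

theorem outerExp_ι_mul_ι_sub (h : IsNormalizedEigenpair B u v) (hn : Module.finrank K M ≤ n) :
    outerExp Q n (ι Q u * ι Q v - ι Q v * ι Q u) = (2 : K) • (ι Q u * ι Q v) := by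
  apply (Φ).injective
  rw [equivExterior_outerExp (isGrade_two_ι_mul_ι_sub u v), equivExterior_ι_mul_ι_sub,
    truncExp_smul_ι_mul_ι (h.finrank_pos.trans_le hn), ← equivExterior_ι_mul_ι_sub,
    ← equivExterior_one (Q := Q), ← map_add, ← h.ι_mul_ι_add_swap, add_add_sub_cancel, two_smul]

theorem outerExp_sub (h : IsNormalizedEigenpair B u v) (hn : Module.finrank K M ≤ n)
    (hB : IsGrade Q 2 B) :
    outerExp Q n (B - (ι Q u * ι Q v - ι Q v * ι Q u)) =
      (2 : K)⁻¹ • (outerExp Q n B + ι Q v * outerExp Q n B * ι Q u) := by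
  have hta := isGrade_two_ι_mul_ι_sub (Q := Q) u v
  have hv : e v * Φ (outerExp Q n B) = (2 : K)⁻¹ • Φ (ι Q v * outerExp Q n B) := by
    rw [equivExterior_ι_mul_outerExp hn hB, h.apply_right, sub_neg_eq_add, map_add, ← two_smul K,
      smul_mul_assoc, inv_smul_smul₀ two_ne_zero]
  have hu : (2 : K) • (e u * Φ (ι Q v * outerExp Q n B)) =
      Φ (outerExp Q n B - ι Q v * outerExp Q n B * ι Q u) := by
    rw [two_smul_ι_mul_equivExterior, map_mul, involute_ι, involute_outerExp hB, ← mul_assoc,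
      h.ι_mul_ι_mul_outerExp hn hB, neg_mul, neg_mul, ← sub_eq_add_neg]
  have hsplit : truncExp K n (Φ (B - (ι Q u * ι Q v - ι Q v * ι Q u))) =
      (1 - (2 : K) • (e u * e v)) * Φ (outerExp Q n B) := by
    rw [equivExterior_outerExp hB, map_sub, sub_eq_neg_add, truncExp_add_of_mem_exteriorPower_two
      hn (neg_mem (isGrade_iff.1 hta)) (isGrade_iff.1 hB), equivExterior_ι_mul_ι_sub, ← neg_smul,
      truncExp_smul_ι_mul_ι (h.finrank_pos.trans_le hn), neg_smul, ← sub_eq_add_neg]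
  apply (Φ).injective
  rw [equivExterior_outerExp (hB.sub hta), hsplit, sub_mul, one_mul, smul_mul_assoc, mul_assoc, hv,
    mul_smul_comm, smul_comm, hu, ← map_smul, ← map_sub]
  congr 1
  module

theorem outerExp_eq_mul (h : IsNormalizedEigenpair B u v) (hn : Module.finrank K M ≤ n)
    (hB : IsGrade Q 2 B) :
    outerExp Q n B = outerExp Q n (B - (ι Q u * ι Q v - ι Q v * ι Q u)) *
      outerExp Q n (ι Q u * ι Q v - ι Q v * ι Q u) := by
  have hu : ι Q v * outerExp Q n B * ι Q u * (ι Q u * ι Q v) = 0 := by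
    rw [mul_assoc, ← mul_assoc (ι Q u), h.ι_mul_self hB, zero_mul, mul_zero]
  rw [h.outerExp_sub hn hB, h.outerExp_ι_mul_ι_sub hn, smul_mul_smul_comm,
    inv_mul_cancel₀ two_ne_zero, one_smul, add_mul, hu, add_zero, h.outerExp_mul_ι_mul_ι hn hB]

end IsNormalizedEigenpair

/-- The outer tangent `ta∧(B) = si∧(B) co∧(B)⁻¹`. It takes the junk value `0` when `co∧(B)` is not
invertible. -/
def outerTan (Q : QuadraticForm K M) (n : ℕ) (B : CliffordAlgebra Q) : CliffordAlgebra Q :=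
  siW Q n B * Ring.inverse (coW Q n B)

theorem IsNormalizedEigenpair.outerTan_eq {u v : M} (h : IsNormalizedEigenpair B u v)
    (hn : Module.finrank K M ≤ n) (hB : IsGrade Q 2 B) (hco : IsUnit (coW Q n B)) :
    outerTan Q n B = ι Q u * ι Q v - ι Q v * ι Q u := by
  rw [outerTan, h.siW_eq hn hB, Ring.mul_inverse_cancel_right _ _ hco]

theorem outerExp_eq_mul_outerExp_outerTan (hn : Module.finrank K M ≤ n) (hB : IsGrade Q 2 B)
    (hco : IsUnit (coW Q n B)) (hone : (bivectorAction B).HasEigenvalue 1)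
    (hneg : (bivectorAction B).HasEigenvalue (-1)) :
    outerExp Q n B = outerExp Q n (B - outerTan Q n B) * outerExp Q n (outerTan Q n B) := by
  obtain ⟨u, v, h⟩ := exists_isNormalizedEigenpair hn hB hco hone hneg
  rw [h.outerTan_eq hn hB hco]
  exact h.outerExp_eq_mul hn hB

theorem Wj_eq_zero (hB : IsGrade Q 2 B) {j : ℕ} (hj : Module.finrank K M < j) :
    Wj Q B j = 0 := by
  apply (Φ).injective
  rw [equivExterior_Wj hB, pow_eq_zero_of_mem_exteriorPower_two hj (isGrade_iff.1 hB), smul_zero,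
    map_zero]

theorem outerExp_neg_mul_reverse_eq_zero (hn : Module.finrank K M ≤ n) (hB : IsGrade Q 2 B) {k : ℕ}
    (hk : ∀ j, k < j → Wj Q B j = 0) {μ : K} (hμ : μ ≠ 0)
    (heigen : Mpoly Q B k μ * reverse (Mpoly Q B k μ) = 0) :
    outerExp Q n (-(μ⁻¹ • B)) * reverse (outerExp Q n (-(μ⁻¹ • B))) = 0 := by
  have hk' (j : ℕ) (hj : k < j) : Wj Q (-(μ⁻¹ • B)) j = 0 := by
    rw [← neg_smul, Wj_smul hB, hk j hj, smul_zero]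
  have hn' (j : ℕ) (hj : n < j) : Wj Q (-(μ⁻¹ • B)) j = 0 :=
    Wj_eq_zero (hB.smul μ⁻¹).neg (hn.trans_lt hj)
  rw [Mpoly_eq_smul_outerExp hB k hμ, outerExp_eq_outerExp hk' hn', map_smul, smul_mul_smul_comm,
    smul_eq_zero] at heigen
  exact heigen.resolve_left (mul_self_ne_zero.2 (pow_ne_zero k (neg_ne_zero.2 hμ)))

theorem outerExp_factor_tan_general (hn : Module.finrank K M ≤ n) (hB : IsGrade Q 2 B) {k : ℕ}
    (hk : ∀ j, k < j → Wj Q B j = 0) {μ : K} (hμ : μ ≠ 0)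
    (heigen : Mpoly Q B k μ * reverse (Mpoly Q B k μ) = 0)
    (hco : IsUnit (coW Q n (μ⁻¹ • B))) :
    outerExp Q n (μ⁻¹ • B) = outerExp Q n (μ⁻¹ • B - outerTan Q n (μ⁻¹ • B)) *
      outerExp Q n (outerTan Q n (μ⁻¹ • B)) :=
  have heigen' := outerExp_neg_mul_reverse_eq_zero hn hB hk hμ heigen
  have ⟨hone, hneg⟩ := hasEigenvalue_of_outerExp_neg_mul_reverse hn (hB.smul μ⁻¹) heigen'
  outerExp_eq_mul_outerExp_outerTan hn (hB.smul μ⁻¹) hco hone hneg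

end CliffordExterior

section BaseChange

variable {K : Type*} [Field K] {L : Type*} [Field L] [Algebra K L]
  {M : Type*} [AddCommGroup M] [Module K M]

variable (K L M) in
/-- The algebra map `⋀M → ⋀(L ⊗ M)` extending `v ↦ 1 ⊗ v`. -/
def exteriorBaseChange : ExteriorAlgebra K M →ₐ[K] ExteriorAlgebra L (L ⊗[K] M) :=
  ExteriorAlgebra.lift K
    ⟨(ExteriorAlgebra.ι L).restrictScalars K ∘ₗ TensorProduct.mk K L M 1,
      fun v => ExteriorAlgebra.ι_sq_zero ((1 : L) ⊗ₜ[K] v)⟩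

local notation "Ψ" => exteriorBaseChange K L M

theorem exteriorBaseChange_ι (v : M) :
    Ψ (ExteriorAlgebra.ι K v) = ExteriorAlgebra.ι L ((1 : L) ⊗ₜ[K] v) :=
  ExteriorAlgebra.lift_ι_apply ..

theorem exteriorBaseChange_contractLeft (d : Module.Dual K M) (x : ExteriorAlgebra K M) :
    Ψ (d⌋x) = d.baseChange L⌋Ψ x := by
  induction x using CliffordAlgebra.left_induction with
  | algebraMap r =>
    rw [AlgHom.commutes, IsScalarTower.algebraMap_apply K L (ExteriorAlgebra L (L ⊗[K] M)),
      contractLeft_algebraMap, contractLeft_algebraMap, map_zero]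
  | add x y hx hy => simp only [map_add, hx, hy]
  | ι_mul x v hx =>
    rw [contractLeft_ι_mul, map_sub, map_smul, map_mul, map_mul, hx]
    change _ • _ - Ψ (ExteriorAlgebra.ι K v) * _ =
      d.baseChange L⌋(Ψ (ExteriorAlgebra.ι K v) * Ψ x)
    rw [exteriorBaseChange_ι, contractLeft_ι_mul, Module.Dual.baseChange_apply_tmul, smul_assoc,
      one_smul]

theorem exteriorBaseChange_mem_exteriorPower {n : ℕ} {x : ExteriorAlgebra K M}
    (hx : x ∈ ⋀[K]^n M) : Ψ x ∈ ⋀[L]^n (L ⊗[K] M) := by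
  induction hx using Submodule.pow_induction_on_left' with
  | algebraMap r =>
    rw [AlgHom.commutes, IsScalarTower.algebraMap_apply K L]
    exact SetLike.algebraMap_mem_graded (fun i : ℕ => ⋀[L]^i (L ⊗[K] M)) _
  | add x y i _ _ hx hy => exact (map_add Ψ x y).symm ▸ add_mem hx hy
  | mem_mul m hm i x _ hx =>
    obtain ⟨v, rfl⟩ := hm
    rw [map_mul, exteriorBaseChange_ι]
    exact ι_mul_mem_exteriorPower _ hx

variable [CharZero K] {Q : QuadraticForm K M}

local instance {F : Type*} [Field F] [CharZero F] : Invertible (2 : F) :=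
  invertibleOfNonzero two_ne_zero

variable (L) in
/-- The algebra map `Cl(Q) → Cl(L ⊗ Q)` extending `v ↦ 1 ⊗ v`. For
`L = ℂ` and `Q = sigQ p q r` it is `toC p q r`. -/
def cliffordBaseChange (Q : QuadraticForm K M) :
    CliffordAlgebra Q →ₐ[K] CliffordAlgebra (Q.baseChange L) :=
  ((ofBaseChange L Q).restrictScalars K).comp Algebra.TensorProduct.includeRight

theorem cliffordBaseChange_ι (v : M) :
    cliffordBaseChange L Q (ι Q v) = ι (Q.baseChange L) ((1 : L) ⊗ₜ[K] v) :=
  ofBaseChange_tmul_ι L Q 1 v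

variable [CharZero L]

theorem associated_baseChange_one_tmul (v : M) :
    QuadraticMap.associated (Q.baseChange L) ((1 : L) ⊗ₜ[K] v) =
      Module.Dual.baseChange L (QuadraticMap.associated Q v) := by
  rw [QuadraticForm.associated_baseChange]
  ext w
  simp

theorem equivExterior_cliffordBaseChange (x : CliffordAlgebra Q) :
    equivExterior (Q.baseChange L) (cliffordBaseChange L Q x) = Ψ (equivExterior Q x) := by
  induction x using CliffordAlgebra.left_induction with
  | algebraMap r =>
    rw [AlgHom.commutes, IsScalarTower.algebraMap_apply K L, equivExterior_algebraMap,
      equivExterior_algebraMap, AlgHom.commutes, ← IsScalarTower.algebraMap_apply K L]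
  | add x y hx hy => simp only [map_add, hx, hy]
  | ι_mul x v hx =>
    rw [map_mul, cliffordBaseChange_ι, equivExterior_ι_mul, equivExterior_ι_mul, map_add, map_mul,
      exteriorBaseChange_ι, exteriorBaseChange_contractLeft, hx, associated_baseChange_one_tmul]

theorem IsGrade.baseChange {ℓ : ℕ} {x : CliffordAlgebra Q} (hx : IsGrade Q ℓ x) :
    IsGrade (Q.baseChange L) ℓ (cliffordBaseChange L Q x) := by
  rw [isGrade_iff, equivExterior_cliffordBaseChange]
  exact exteriorBaseChange_mem_exteriorPower (isGrade_iff.1 hx)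

theorem Wj_cliffordBaseChange {B : CliffordAlgebra Q} (hB : IsGrade Q 2 B) (j : ℕ) :
    Wj (Q.baseChange L) (cliffordBaseChange L Q B) j = cliffordBaseChange L Q (Wj Q B j) := by
  apply (equivExterior (Q.baseChange L)).injective
  rw [equivExterior_Wj hB.baseChange, equivExterior_cliffordBaseChange, ← map_pow,
    equivExterior_cliffordBaseChange, equivExterior_Wj hB, map_smul, ← algebraMap_smul L (_ : K),
    map_inv₀, map_natCast]

end BaseChange

end

open CliffordAlgebra in
/-- if `μ ≠ 0` is an eigenvalue of the bivector `B` (a root of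
`P_{2k}(μ) = M_μ M̃_μ`), `B_μ := B/μ`, and the outer tangent
`ta∧(B_μ) = si∧(B_μ) co∧(B_μ)⁻¹` exists (i.e. `co∧(B_μ)` is invertible), then
`Λ^{B_μ} = Λ^{B_μ - ta∧(B_μ)} Λ^{ta∧(B_μ)}`. -/
theorem outerExp_factor_tan (p q r : ℕ) (B : CliffordAlgebra (sigQ p q r))
    (hB : IsGrade (sigQ p q r) 2 B) (k : ℕ) (hk : HasEffDim (sigQ p q r) B k)
    (μ : ℂ) (hμ : μ ≠ 0)
    (heigen : Mpoly (sigQc p q r) (toC p q r B) k μ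
        * reverse (Mpoly (sigQc p q r) (toC p q r B) k μ) = 0)
    (Bμ : CliffordAlgebra (sigQc p q r)) (hBμ : Bμ = μ⁻¹ • toC p q r B)
    (hco : IsUnit (coW (sigQc p q r) (p + q + r) Bμ))
    (ta : CliffordAlgebra (sigQc p q r))
    (hta : ta = siW (sigQc p q r) (p + q + r) Bμ
        * Ring.inverse (coW (sigQc p q r) (p + q + r) Bμ)) :
    outerExp (sigQc p q r) (p + q + r) Bμ
      = outerExp (sigQc p q r) (p + q + r) (Bμ - ta)
          * outerExp (sigQc p q r) (p + q + r) ta := by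
  subst hBμ hta
  have hW (j : ℕ) (hj : k < j) : Wj (sigQc p q r) (toC p q r B) j = 0 :=
    (Wj_cliffordBaseChange hB j).trans ((congrArg _ (hk.2 j hj)).trans (map_zero _))
  exact outerExp_factor_tan_general (by simp) hB.baseChange hW hμ heigen hco
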